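/- Let G : ℝ² → ℝ² be a lift of a homeomorphism g of the two-torus homotopic to the identity, let Û ⊆ ℝ² be bounded and connected with G(Û) ∩ Û ≠ ∅, let λ ≠ 0, v ∈ ℝ² \ {0} and a < b. If ρ_Û(G) = L_{λ,v}[a,b], then the full rotation set satisfies ρ(G) = L_{λ,v}[a,b]. -/

import Mathlib

noncomputable section
open Filter Topology Metric Set MeasureTheory

/-- Euclidean space `ℝ^d`. -/
abbrev E (d : ℕ) := EuclideanSpace ℝ (Fin d)

/-- The integer lattice `ℤ^d` as an additive subgroup of `ℝ^d`. -/
def ZLat (d : ℕ) : AddSubgroup (E d) where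
  carrier := {z | ∀ i, ∃ m : ℤ, z i = (m : ℝ)}
  zero_mem' := fun i => ⟨0, by simp⟩
  add_mem' := by
    intro x y hx hy i
    obtain ⟨m, hm⟩ := hx i
    obtain ⟨n, hn⟩ := hy i
    exact ⟨m + n, by simp [PiLp.add_apply, hm, hn]⟩
  neg_mem' := by
    intro x hx i
    obtain ⟨m, hm⟩ := hx i
    exact ⟨-m, by simp [PiLp.neg_apply, hm]⟩

/-- The torus `T^d = ℝ^d / ℤ^d`. -/
abbrev T (d : ℕ) := E d ⧸ ZLat d

/-- The canonical projection `π : ℝ^d → T^d`. -/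
def tpi (d : ℕ) : E d → T d := QuotientAddGroup.mk

/-- The set of rotation vectors of orbit segments starting in `W ⊆ ℝ^d`:
`{ρ | ∃ nᵢ → ∞, zᵢ ∈ W, (F^{nᵢ}(zᵢ) - zᵢ)/nᵢ → ρ}`. -/
def rotRel {d : ℕ} (F : E d → E d) (W : Set (E d)) : Set (E d) :=
  {ρ | ∃ (n : ℕ → ℕ) (z : ℕ → E d),
    Tendsto n atTop atTop ∧ (∀ i, z i ∈ W) ∧
    Tendsto (fun i => (n i : ℝ)⁻¹ • (F^[n i] (z i) - z i)) atTop (𝓝 ρ)}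

/-- The Misiurewicz–Ziemian rotation set `ρ(F)` of a lift `F`. -/
def rotSet {d : ℕ} (F : E d → E d) : Set (E d) := rotRel F Set.univ

/-- The rotation subset `ρ_U(F)` for `U ⊆ T^d` (starting points in `π⁻¹(U)`). -/
def rotU {d : ℕ} (F : E d → E d) (U : Set (T d)) : Set (E d) :=
  rotRel F (tpi d ⁻¹' U)

/-- `F` is a lift of the torus homeomorphism `f` (which is then homotopic to the
identity, as expressed by commutation with the deck translations). -/
def IsLift {d : ℕ} (F : E d ≃ₜ E d) (f : T d ≃ₜ T d) : Prop :=
  (∀ z : E d, tpi d (F z) = f (tpi d z)) ∧ ∀ z : E d, ∀ m ∈ ZLat d, F (z + m) = F z + m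

/-- `U ⊆ T^d` is bounded: the connected components of `π⁻¹(U)` are bounded. -/
def BoundedSet {d : ℕ} (U : Set (T d)) : Prop :=
  ∀ z ∈ tpi d ⁻¹' U, Bornology.IsBounded (connectedComponentIn (tpi d ⁻¹' U) z)

/-- `U ⊆ T^d` is recurrent: `f^n(U) ∩ U ≠ ∅` for infinitely many `n ≥ 1`. -/
def Recurrent {d : ℕ} (f : T d ≃ₜ T d) (U : Set (T d)) : Prop :=
  {n : ℕ | 1 ≤ n ∧ ((⇑f)^[n] '' U ∩ U).Nonempty}.Infinite

/-- The Euclidean scalar product `⟨z, v⟩` in `ℝ²`. -/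
def sdot (v z : E 2) : ℝ := z 0 * v 0 + z 1 * v 1

/-- `⟨z, v^⊥⟩` where `v^⊥ = (-v₂, v₁)`. -/
def pdot (v z : E 2) : ℝ := z 1 * v 0 - z 0 * v 1

/-- The affine line `L_{λ,v} = λv + {v}^⊥ = {z | ⟨z,v⟩ = λ⟨v,v⟩}`. -/
def lineL (lam : ℝ) (v : E 2) : Set (E 2) := {z | sdot v z = lam * sdot v v}

/-- A vector of `ℝ²` is rational if both coordinates are rational. -/
def RatVec (z : E 2) : Prop := (∃ q : ℚ, z 0 = (q : ℝ)) ∧ ∃ q : ℚ, z 1 = (q : ℝ)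

/-- The segment `L_{λ,v}[a,b] = {z ∈ L_{λ,v} | a⟨z,v⟩ ≤ ⟨z,v^⊥⟩ ≤ b⟨z,v⟩}`. -/
def lineSeg (lam : ℝ) (v : E 2) (a b : ℝ) : Set (E 2) :=
  {z ∈ lineL lam v | a * sdot v z ≤ pdot v z ∧ pdot v z ≤ b * sdot v z}

/-- The cone `C_v[a,b] = {z | a⟨z,v⟩ ≤ ⟨z,v^⊥⟩ ≤ b⟨z,v⟩}`. -/
def coneC (v : E 2) (a b : ℝ) : Set (E 2) :=
  {z | a * sdot v z ≤ pdot v z ∧ pdot v z ≤ b * sdot v z}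

/-!
Let `K` be the closure of `Û`. Since `ρ_Û(G)` is strictly separated from `0`, the iterates of `K`
drift to infinity in some direction `h`, and since it contains two independent vectors `ρ₁, ρ₂`,
they oscillate without bound in directions `x` that are positive at `ρ₁` and negative at `ρ₂`. An
early piece of the orbit of `K`, translated by a vector `S` of the open cone spanned by `ρ₁` and
`ρ₂`, must therefore cross a later piece: the union `C` of finitely many iterates of `K` contains
two points that differ by `S`. Apply this to two independent lattice vectors `S`, `T`. Then `C`
is connected and linked to its neighbours among the translates `C + iS + jT`, so finitely many of
these form a set `Q` that encloses some lattice translate of every point of the plane. A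
homeomorphism respects enclosure, hence a bound for the drift of the orbits starting in `Q`, in
any given direction, is a bound for all orbits, and no rotation vector of `G` can be separated
from `ρ_Û(G)` by a line.

The crossing and enclosure arguments replace the Jordan curve theorem by the observation that the
increments of a continuous logarithm around the boundary of a square add up to zero.
-/

section Logarithms

theorem sub_eq_sub_of_exp_eq_const_mul_exp {X : Type*} [TopologicalSpace X] [PreconnectedSpace X]
    {θ ℓ : X → ℂ} (hθ : Continuous θ) (hℓ : Continuous ℓ) {c : ℂ}
    (h : ∀ x, Complex.exp (ℓ x) = c * Complex.exp (θ x)) (x y : X) :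
    ℓ x - ℓ y = θ x - θ y := by
  have hexp : ∀ z, Complex.exp (ℓ z - θ z) = c := fun z => by
    rw [Complex.exp_sub, h, mul_div_assoc, div_self (Complex.exp_ne_zero _), mul_one]
  have hconst : ℓ x - θ x = ℓ y - θ y :=
    congrFun (Complex.isCoveringMap_exp.eq_of_comp_eq (hℓ.sub hθ)
      (continuous_const (y := ℓ y - θ y)) (funext fun z => Subtype.ext <|
        (hexp z).trans (hexp y).symm) y rfl) x
  linear_combination hconst

theorem exists_continuous_exp_eq {F : ℝ × ℝ → ℂ} (hF : Continuous F) (hF₀ : ∀ x, F x ≠ 0) :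
    ∃ θ : ℝ × ℝ → ℂ, Continuous θ ∧ ∀ x, Complex.exp (θ x) = F x := by
  obtain ⟨θ, ⟨-, hθ⟩, -⟩ := Complex.isCoveringMapOn_exp.existsUnique_continuousMap_lifts
    (⟨F, hF⟩ : C(ℝ × ℝ, ℂ)) (a₀ := (0, 0)) (e₀ := Complex.log (F (0, 0)))
    (Complex.exp_log (hF₀ _)) hF₀
  exact ⟨θ, θ.continuous, congrFun hθ⟩

/- The increments along the four sides are increments of one logarithm of `F` on the square; the
constants let each side use whichever rotated branch of the logarithm is available there. -/
theorem log_increments_boundary_square {F : ℝ × ℝ → ℂ} (hF : Continuous F) (hF₀ : ∀ x, F x ≠ 0)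
    {left right bottom top : ℝ → ℂ} (hleft : Continuous left) (hright : Continuous right)
    (hbottom : Continuous bottom) (htop : Continuous top) {cl cr cb ct : ℂ}
    (hl : ∀ t, Complex.exp (left t) = cl * F (0, t))
    (hr : ∀ t, Complex.exp (right t) = cr * F (1, t))
    (hb : ∀ s, Complex.exp (bottom s) = cb * F (s, 0))
    (ht : ∀ s, Complex.exp (top s) = ct * F (s, 1)) :
    (bottom 1 - bottom 0) + (right 1 - right 0) = (left 1 - left 0) + (top 1 - top 0) := by
  obtain ⟨θ, hθ, hexp⟩ := exists_continuous_exp_eq hF hF₀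
  have increment {ℓ : ℝ → ℂ} (hℓ : Continuous ℓ) {c : ℂ} {σ : ℝ → ℝ × ℝ} (hσ : Continuous σ)
      (h : ∀ t, Complex.exp (ℓ t) = c * F (σ t)) : ℓ 1 - ℓ 0 = θ (σ 1) - θ (σ 0) :=
    sub_eq_sub_of_exp_eq_const_mul_exp (hθ.comp hσ) hℓ
      (fun t => by rw [h, Function.comp_apply, hexp]) 1 0
  have el := increment hleft (by fun_prop) hl
  have er := increment hright (by fun_prop) hr
  have eb := increment hbottom (by fun_prop) hb
  have et := increment htop (by fun_prop) ht
  linear_combination eb + er - el - et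

theorem log_sub_log_neg_ne {z w : ℂ} (hz : z.im < 0) (hw : 0 < w.im) :
    Complex.log z - Complex.log (-z) ≠ Complex.log w - Complex.log (-w) := fun h => by
  have him := congrArg Complex.im h
  simp only [Complex.sub_im, Complex.log_im, Complex.arg_neg_eq_arg_sub_pi_of_im_pos hw,
    Complex.arg_neg_eq_arg_add_pi_of_im_neg hz] at him
  linarith [Real.pi_pos]

theorem mem_slitPlane_of_re_nonneg {z : ℂ} (hz : 0 ≤ z.re) (hz₀ : z ≠ 0) :
    z ∈ Complex.slitPlane := by
  rw [Complex.mem_slitPlane_iff]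
  by_contra! h
  exact hz₀ (Complex.ext (h.1.antisymm hz) h.2)

end Logarithms

section PlanarTopology

theorem exists_curve_of_isPreconnected {X : Type*} [TopologicalSpace X]
    [LocallyPathConnectedSpace X] {K O : Set X} (hK : IsPreconnected K) (hO : IsOpen O)
    (hKO : K ⊆ O) {p q : X} (hp : p ∈ K) (hq : q ∈ K) :
    ∃ γ : ℝ → X, Continuous γ ∧ γ 0 = p ∧ γ 1 = q ∧ ∀ t, γ t ∈ O := by
  have hconn : IsConnected (connectedComponentIn O p) :=
    isConnected_connectedComponentIn_iff.2 (hKO hp)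
  have hpath := hO.connectedComponentIn.isConnected_iff_isPathConnected.1 hconn
  have hsub := hK.subset_connectedComponentIn hp hKO
  obtain ⟨γ, hγ⟩ := hpath.joinedIn p (hsub hp) q (hsub hq)
  exact ⟨γ.extend, γ.continuous_extend, γ.extend_zero, γ.extend_one,
    fun t => connectedComponentIn_subset O p (hγ (projIcc 0 1 zero_le_one t))⟩

theorem exists_eq_of_crossing_curves {α β : ℝ → ℂ} (hα : Continuous α) (hβ : Continuous β)
    (hleft : ∀ t, β 0 - α t ∈ Complex.slitPlane) (hright : ∀ t, α t - β 1 ∈ Complex.slitPlane)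
    (hbottom : ∀ s, β s - α 0 ∈ Complex.slitPlane) (htop : ∀ s, α 1 - β s ∈ Complex.slitPlane)
    (hneg : (β 0 - α 1).im < 0) (hpos : 0 < (β 1 - α 0).im) : ∃ s t, β s = α t := by
  by_contra! hne
  have exp_log {z : ℂ} (hz : z ∈ Complex.slitPlane) : Complex.exp (Complex.log z) = z :=
    Complex.exp_log (Complex.slitPlane_ne_zero hz)
  have hsum := log_increments_boundary_square (F := fun x => β x.1 - α x.2) (by fun_prop)
    (fun x => sub_ne_zero.2 (hne x.1 x.2))
    (left := fun t => Complex.log (β 0 - α t)) (right := fun t => Complex.log (α t - β 1))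
    (bottom := fun s => Complex.log (β s - α 0)) (top := fun s => Complex.log (α 1 - β s))
    (Continuous.clog (by fun_prop) hleft) (Continuous.clog (by fun_prop) hright)
    (Continuous.clog (by fun_prop) hbottom) (Continuous.clog (by fun_prop) htop)
    (cl := 1) (cr := -1) (cb := 1) (ct := -1)
    (fun t => by rw [exp_log (hleft t), one_mul])
    (fun t => by rw [exp_log (hright t), neg_one_mul, neg_sub])
    (fun s => by rw [exp_log (hbottom s), one_mul])
    (fun s => by rw [exp_log (htop s), neg_one_mul, neg_sub])
  refine log_sub_log_neg_ne hneg hpos ?_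
  rw [neg_sub, neg_sub]
  linear_combination -hsum

theorem inter_nonempty_of_crossing {A B : Set ℂ} (hA : IsCompact A) (hB : IsCompact B)
    (hAc : IsPreconnected A) (hBc : IsPreconnected B) {q₁ q₂ r₁ r₂ : ℂ}
    (hq₁ : q₁ ∈ A) (hq₂ : q₂ ∈ A) (hr₁ : r₁ ∈ B) (hr₂ : r₂ ∈ B)
    (hA_re : ∀ z ∈ A, z.re ∈ Icc r₂.re r₁.re) (hB_re : ∀ z ∈ B, z.re ≤ q₂.re)
    (hB_im : ∀ z ∈ B, q₁.im < z.im) (him : r₁.im < q₂.im) : (A ∩ B).Nonempty := by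
  by_contra hAB
  rw [not_nonempty_iff_eq_empty, ← disjoint_iff_inter_eq_empty] at hAB
  have slit_of_ne {z w : ℂ} (hre : w.re ≤ z.re) (hne : z ≠ w) : z - w ∈ Complex.slitPlane :=
    mem_slitPlane_of_re_nonneg (by simpa using hre) (sub_ne_zero.2 hne)
  have slitA : ∀ z ∈ A, r₁ - z ∈ Complex.slitPlane ∧ z - r₂ ∈ Complex.slitPlane := fun z hz =>
    ⟨slit_of_ne (hA_re z hz).2 (hAB.ne_of_mem hz hr₁).symm,
      slit_of_ne (hA_re z hz).1 (hAB.ne_of_mem hz hr₂)⟩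
  have slitB : ∀ z ∈ B, z - q₁ ∈ Complex.slitPlane ∧ q₂ - z ∈ Complex.slitPlane := fun z hz =>
    ⟨Or.inr (sub_pos.2 (hB_im z hz)).ne', slit_of_ne (hB_re z hz) (hAB.ne_of_mem hq₂ hz)⟩
  obtain ⟨U, V, hU, hV, hAU, hBV, hUV⟩ := SeparatedNhds.of_isCompact_isCompact hA hB hAB
  have open_slit {f : ℂ → ℂ} (hf : Continuous f) : IsOpen {z | f z ∈ Complex.slitPlane} :=
    Complex.isOpen_slitPlane.preimage hf
  obtain ⟨α, hα, rfl, rfl, hα_mem⟩ := exists_curve_of_isPreconnected hAc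
    (hU.inter ((open_slit (by fun_prop)).inter (open_slit (by fun_prop))))
    (fun z hz => ⟨hAU hz, slitA z hz⟩) hq₁ hq₂
  obtain ⟨β, hβ, rfl, rfl, hβ_mem⟩ := exists_curve_of_isPreconnected hBc
    (hV.inter ((open_slit (by fun_prop)).inter (open_slit (by fun_prop))))
    (fun z hz => ⟨hBV hz, slitB z hz⟩) hr₁ hr₂
  obtain ⟨s, t, hst⟩ := exists_eq_of_crossing_curves hα hβ (fun t => (hα_mem t).2.1)
    (fun t => (hα_mem t).2.2) (fun s => (hβ_mem s).2.1) (fun s => (hβ_mem s).2.2)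
    (sub_neg.2 him) (sub_pos.2 (hB_im _ hr₂))
  exact hUV.ne_of_mem (hα_mem t).1 (hβ_mem s).1 hst.symm

end PlanarTopology

section Encloses

/-- `Q` encloses `w` if every path from `w` leaving some fixed compact set has to meet `Q`; in a
non-compact plane this says that `w` lies in `Q` or in a bounded component of its complement. -/
def Encloses {X : Type*} [TopologicalSpace X] (Q : Set X) (w : X) : Prop :=
  ∃ L : Set X, IsCompact L ∧ ∀ w' ∉ L, ∀ P : Path w w', ∃ r, P r ∈ Q

namespace Encloses

variable {X Y : Type*} [TopologicalSpace X] [TopologicalSpace Y]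

theorem mono {Q Q' : Set X} {w : X} (h : Encloses Q w) (hQ : Q ⊆ Q') : Encloses Q' w := by
  obtain ⟨L, hL, hmeet⟩ := h
  exact ⟨L, hL, fun w' hw' P => (hmeet w' hw' P).imp fun _ hr => hQ hr⟩

theorem image {Q : Set X} {w : X} (h : Encloses Q w) (H : X ≃ₜ Y) :
    Encloses (H '' Q) (H w) := by
  obtain ⟨L, hL, hmeet⟩ := h
  refine ⟨H '' L, hL.image H.continuous, fun w' hw' P => ?_⟩
  obtain ⟨r, hr⟩ := hmeet (H.symm w') (fun hL' => hw' ⟨_, hL', H.apply_symm_apply w'⟩)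
    ((P.map H.symm.continuous).cast (H.symm_apply_apply w).symm rfl)
  exact ⟨r, H.symm (P r), hr, H.apply_symm_apply _⟩

theorem iterate {Q : Set X} {w : X} (h : Encloses Q w) (H : X ≃ₜ X) (n : ℕ) :
    Encloses (H^[n] '' Q) (H^[n] w) := by
  induction n with
  | zero => simpa using h
  | succ n ih =>
    rw [Function.iterate_succ', image_comp]
    exact ih.image H

/- Otherwise the ray from a point of `Q` through `w`, continued beyond `w`, escapes to infinity
without meeting `Q`. -/
theorem le_of_forall_le {V : Type*} [AddCommGroup V] [TopologicalSpace V] [Module ℝ V]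
    [ContinuousAdd V] [ContinuousSMul ℝ V] {Q : Set V} {w : V} (h : Encloses Q w)
    (hQ : Q.Nonempty) {f : V →L[ℝ] ℝ} {B : ℝ} (hB : ∀ z ∈ Q, f z ≤ B) : f w ≤ B := by
  obtain ⟨L, hL, hmeet⟩ := h
  obtain ⟨q, hq⟩ := hQ
  by_contra! hlt
  have hslope : 0 < f (w - q) := by rw [map_sub, sub_pos]; exact (hB q hq).trans_lt hlt
  obtain ⟨R, hR⟩ := (hL.image f.continuous).bddAbove
  obtain ⟨k, hk⟩ := Archimedean.arch (R - f w + 1) hslope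
  have hesc : w + (k : ℝ) • (w - q) ∉ L := fun hmem => by
    have := hR ⟨_, hmem, rfl⟩
    rw [map_add, map_smul, smul_eq_mul] at this
    rw [nsmul_eq_mul] at hk
    linarith
  obtain ⟨r, hr⟩ := hmeet _ hesc
    { toFun := fun r => w + ((r : ℝ) * k) • (w - q)
      continuous_toFun := by fun_prop
      source' := by simp
      target' := by simp }
  have hle : f (w + ((r : ℝ) * k) • (w - q)) ≤ B := hB _ hr
  rw [map_add, map_smul, smul_eq_mul] at hle
  have : 0 ≤ (r : ℝ) * k * f (w - q) := mul_nonneg (mul_nonneg r.2.1 k.cast_nonneg) hslope.le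
  linarith

end Encloses

theorem exists_eq_of_enclosing_curves {α β : ℝ → ℂ} (hα : Continuous α) (hβ : Continuous β)
    (h₀ : α 0 = β 0) (h₁ : α 1 = β 1) {w w' : ℂ} (P : Path w w') {c : ℂ}
    (hαw : ∀ t, c * (α t - w) ∈ Complex.slitPlane) (hβw : ∀ t, c * (w - β t) ∈ Complex.slitPlane)
    (hneg : (c * (α 0 - w)).im < 0) (hpos : 0 < (c * (α 1 - w)).im)
    (hαw' : ∀ t, ‖α t‖ < ‖w'‖) (hβw' : ∀ t, ‖β t‖ < ‖w'‖) :
    ∃ t r, P r = α t ∨ P r = β t := by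
  by_contra! hne
  have hα_ne (r t : ℝ) : α t - P.extend r ≠ 0 := sub_ne_zero.2 (hne t _).1.symm
  have hβ_ne (r t : ℝ) : β t - P.extend r ≠ 0 := sub_ne_zero.2 (hne t _).2.symm
  have hw' : w' ≠ 0 := norm_pos_iff.1 ((norm_nonneg _).trans_lt (hαw' 0))
  have far_slit {z : ℂ} (hz : ‖z‖ < ‖w'‖) : 1 + -(z / w') ∈ Complex.slitPlane :=
    Complex.mem_slitPlane_of_norm_lt_one
      (by rwa [norm_neg, norm_div, div_lt_one (norm_pos_iff.2 hw')])
  have exp_log {z : ℂ} (hz : z ∈ Complex.slitPlane) : Complex.exp (Complex.log z) = z :=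
    Complex.exp_log (Complex.slitPlane_ne_zero hz)
  have hsum := log_increments_boundary_square
    (F := fun x => (α x.2 - P.extend x.1) / (β x.2 - P.extend x.1))
    (Continuous.div (by fun_prop) (by fun_prop) fun x => hβ_ne x.1 x.2)
    (fun x => div_ne_zero (hα_ne x.1 x.2) (hβ_ne x.1 x.2))
    (left := fun t => Complex.log (c * (α t - w)) - Complex.log (c * (w - β t)))
    (right := fun t => Complex.log (1 + -(α t / w')) - Complex.log (1 + -(β t / w')))
    (bottom := fun _ => 0) (top := fun _ => 0) (cl := -1) (cr := 1) (cb := 1) (ct := 1)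
    ((Continuous.clog (by fun_prop) hαw).sub (Continuous.clog (by fun_prop) hβw))
    ((Continuous.clog (by fun_prop) fun t => far_slit (hαw' t)).sub
      (Continuous.clog (by fun_prop) fun t => far_slit (hβw' t)))
    continuous_const continuous_const
    (fun t => by
      have hc : c ≠ 0 := left_ne_zero_of_mul (Complex.slitPlane_ne_zero (hαw t))
      rw [Complex.exp_sub, exp_log (hαw t), exp_log (hβw t), P.extend_zero,
        mul_div_mul_left _ _ hc, ← neg_sub (β t) w, div_neg, neg_one_mul])
    (fun t => by
      rw [Complex.exp_sub, exp_log (far_slit (hαw' t)), exp_log (far_slit (hβw' t)),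
        P.extend_one, one_mul, ← neg_sub w' (α t), ← neg_sub w' (β t), neg_div_neg_eq,
        ← sub_eq_add_neg, ← sub_eq_add_neg, one_sub_div hw', one_sub_div hw',
        div_div_div_cancel_right₀ hw'])
    (fun r => by simp only [h₀, div_self (hβ_ne r 0), Complex.exp_zero, one_mul])
    (fun r => by simp only [h₁, div_self (hβ_ne r 1), Complex.exp_zero, one_mul])
  refine log_sub_log_neg_ne hneg hpos ?_
  simp only [← mul_neg, neg_sub]
  simp only [h₀, h₁] at hsum ⊢
  linear_combination hsum

theorem encloses_union_of_slitPlane {K₁ K₂ : Set ℂ} (hK₁ : IsPreconnected K₁)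
    (hK₂ : IsPreconnected K₂) (hb₁ : Bornology.IsBounded K₁) (hb₂ : Bornology.IsBounded K₂)
    {p q : ℂ} (hp : p ∈ K₁ ∩ K₂) (hq : q ∈ K₁ ∩ K₂) {w c : ℂ}
    (h₁ : ∀ z ∈ K₁, c * (z - w) ∈ Complex.slitPlane)
    (h₂ : ∀ z ∈ K₂, c * (w - z) ∈ Complex.slitPlane)
    (hneg : (c * (p - w)).im < 0) (hpos : 0 < (c * (q - w)).im) : Encloses (K₁ ∪ K₂) w := by
  obtain ⟨R, hR⟩ := (hb₁.union hb₂).subset_closedBall 0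
  refine ⟨closedBall 0 R, isCompact_closedBall 0 R, fun w' hw' P => ?_⟩
  by_contra! hmiss
  have hw'R : R < ‖w'‖ := by simpa using hw'
  have hball : ∀ z ∈ K₁ ∪ K₂, ‖z‖ < ‖w'‖ := fun z hz =>
    (mem_closedBall_zero_iff.1 (hR hz)).trans_lt hw'R
  have hPc : IsOpen (range P)ᶜ := (isCompact_range P.continuous).isClosed.isOpen_compl
  have hmiss' : ∀ z ∈ K₁ ∪ K₂, z ∈ (range P)ᶜ := fun z hz ⟨r, hr⟩ => hmiss r (hr ▸ hz)
  have open_slit {f : ℂ → ℂ} (hf : Continuous f) : IsOpen {z | f z ∈ Complex.slitPlane} :=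
    Complex.isOpen_slitPlane.preimage hf
  have open_norm : IsOpen {z : ℂ | ‖z‖ < ‖w'‖} := isOpen_lt continuous_norm continuous_const
  obtain ⟨α, hα, rfl, rfl, hα_mem⟩ := exists_curve_of_isPreconnected hK₁
    (hPc.inter ((open_slit (by fun_prop)).inter open_norm))
    (fun z hz => ⟨hmiss' z (Or.inl hz), h₁ z hz, hball z (Or.inl hz)⟩) hp.1 hq.1
  obtain ⟨β, hβ, hβ₀, hβ₁, hβ_mem⟩ := exists_curve_of_isPreconnected hK₂
    (hPc.inter ((open_slit (by fun_prop)).inter open_norm))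
    (fun z hz => ⟨hmiss' z (Or.inr hz), h₂ z hz, hball z (Or.inr hz)⟩) hp.2 hq.2
  obtain ⟨t, r, hr | hr⟩ := exists_eq_of_enclosing_curves hα hβ hβ₀.symm hβ₁.symm P
    (fun t => (hα_mem t).2.1) (fun t => (hβ_mem t).2.1) hneg hpos
    (fun t => (hα_mem t).2.2) (fun t => (hβ_mem t).2.2)
  · exact (hα_mem t).1 ⟨r, hr⟩
  · exact (hβ_mem t).1 ⟨r, hr⟩

end Encloses

section Grid

open scoped Pointwise

/-- The chain of translates `C, C + S, …, C + N • S`. -/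
def translateChain {V : Type*} [AddMonoid V] (C : Set V) (S : V) (N : ℕ) : Set V :=
  C + (· • S) '' Iic N

theorem mem_translateChain {V : Type*} [AddMonoid V] {C : Set V} {S : V} {N : ℕ} {y : V} :
    y ∈ translateChain C S N ↔ ∃ z ∈ C, ∃ i ≤ N, z + i • S = y := by
  simp only [translateChain, Set.mem_add, mem_image, mem_Iic, exists_exists_and_eq_and]

theorem isPreconnected_translateChain {V : Type*} [AddCommMonoid V] [TopologicalSpace V]
    [ContinuousAdd V] {C : Set V} {S : V} (hC : IsPreconnected C) (hS : ∃ y ∈ C, y + S ∈ C)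
    (N : ℕ) : IsPreconnected (translateChain C S N) := by
  rw [translateChain, ← iUnion_add_right_image, biUnion_image]
  refine IsPreconnected.biUnion_of_chain ordConnected_Iic
    (fun i _ => hC.image _ (by fun_prop)) fun i _ _ => ?_
  obtain ⟨y, hy, hyS⟩ := hS
  exact ⟨y + S + i • S, ⟨y + S, hyS, rfl⟩, y, hy, by
    simp only [Order.succ_eq_add_one, succ_nsmul', add_assoc]⟩

theorem isBounded_translateChain {V : Type*} [SeminormedAddCommGroup V] {C : Set V}
    (hC : Bornology.IsBounded C) (S : V) (N : ℕ) :
    Bornology.IsBounded (translateChain C S N) :=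
  hC.add ((finite_Iic N).image _).isBounded

/-- The chain of translates of `C` that makes `N` steps along `S` followed by `N` steps
along `T`. -/
def translateElbow {V : Type*} [AddMonoid V] (C : Set V) (S T : V) (N : ℕ) : Set V :=
  translateChain C S N ∪ translateChain ((· + N • S) '' C) T N

theorem exists_of_mem_translateElbow {V : Type*} [AddMonoid V] {C : Set V} {S T : V} {N : ℕ}
    {y : V} (hy : y ∈ translateElbow C S T N) :
    ∃ c ∈ C, ∃ i ≤ N, ∃ j ≤ N, c + i • S + j • T = y ∧ (j = 0 ∨ i = N) := by
  rcases hy with hy | hy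
  · obtain ⟨c, hc, i, hi, rfl⟩ := mem_translateChain.1 hy
    exact ⟨c, hc, i, hi, 0, N.zero_le, by rw [zero_nsmul, add_zero], Or.inl rfl⟩
  · obtain ⟨_, ⟨c, hc, rfl⟩, j, hj, rfl⟩ := mem_translateChain.1 hy
    exact ⟨c, hc, N, le_rfl, j, hj, rfl, Or.inr rfl⟩

/-- The grid of translates `C + i • S + j • T` with `i, j ≤ N`. -/
def translateGrid {V : Type*} [AddMonoid V] (C : Set V) (S T : V) (N : ℕ) : Set V :=
  translateChain (translateChain C S N) T N

theorem mem_translateGrid {V : Type*} [AddMonoid V] {C : Set V} {S T : V} {N : ℕ} {y : V} :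
    y ∈ translateGrid C S T N ↔ ∃ c ∈ C, ∃ i ≤ N, ∃ j ≤ N, c + i • S + j • T = y := by
  simp only [translateGrid, mem_translateChain]
  constructor
  · rintro ⟨_, ⟨c, hc, i, hi, rfl⟩, j, hj, rfl⟩
    exact ⟨c, hc, i, hi, j, hj, rfl⟩
  · rintro ⟨c, hc, i, hi, j, hj, rfl⟩
    exact ⟨_, ⟨c, hc, i, hi, rfl⟩, j, hj, rfl⟩

theorem isBounded_translateGrid {V : Type*} [SeminormedAddCommGroup V] {C : Set V}
    (hC : Bornology.IsBounded C) (S T : V) (N : ℕ) :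
    Bornology.IsBounded (translateGrid C S T N) :=
  isBounded_translateChain (isBounded_translateChain hC S N) T N

theorem image_translateGrid {V V' Φ : Type*} [AddMonoid V] [AddMonoid V'] [FunLike Φ V V']
    [AddMonoidHomClass Φ V V'] (φ : Φ) (C : Set V) (S T : V) (N : ℕ) :
    φ '' translateGrid C S T N = translateGrid (φ '' C) (φ S) (φ T) N := by
  ext y
  simp only [mem_translateGrid, mem_image]
  constructor
  · rintro ⟨_, ⟨c, hc, i, hi, j, hj, rfl⟩, rfl⟩
    exact ⟨φ c, ⟨c, hc, rfl⟩, i, hi, j, hj, by simp only [map_add, map_nsmul]⟩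
  · rintro ⟨_, ⟨c, hc, rfl⟩, i, hi, j, hj, rfl⟩
    exact ⟨_, ⟨c, hc, i, hi, j, hj, rfl⟩, by simp only [map_add, map_nsmul]⟩

theorem translateElbow_union_subset_translateGrid {V : Type*} [AddCommMonoid V] (C : Set V)
    (S T : V) (N : ℕ) :
    translateElbow C S T N ∪ translateElbow C T S N ⊆ translateGrid C S T N := by
  rintro y (hy | hy)
  · obtain ⟨c, hc, i, hi, j, hj, rfl, -⟩ := exists_of_mem_translateElbow hy
    exact mem_translateGrid.2 ⟨c, hc, i, hi, j, hj, rfl⟩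
  · obtain ⟨c, hc, j, hj, i, hi, rfl, -⟩ := exists_of_mem_translateElbow hy
    exact mem_translateGrid.2 ⟨c, hc, i, hi, j, hj, add_right_comm _ _ _⟩

theorem start_mem_translateElbow {V : Type*} [AddMonoid V] {C : Set V} {x : V} (hx : x ∈ C)
    (S T : V) (N : ℕ) : x ∈ translateElbow C S T N :=
  Or.inl (mem_translateChain.2 ⟨x, hx, 0, N.zero_le, by rw [zero_nsmul, add_zero]⟩)

theorem end_mem_translateElbow {V : Type*} [AddMonoid V] {C : Set V} {x : V} (hx : x ∈ C)
    (S T : V) (N : ℕ) : x + N • S + N • T ∈ translateElbow C S T N :=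
  Or.inr (mem_translateChain.2 ⟨_, mem_image_of_mem _ hx, N, le_rfl, rfl⟩)

theorem isPreconnected_translateElbow {V : Type*} [AddCommMonoid V] [TopologicalSpace V]
    [ContinuousAdd V] {C : Set V} {S T : V} (hC : IsPreconnected C) (hS : ∃ y ∈ C, y + S ∈ C)
    (hT : ∃ y ∈ C, y + T ∈ C) (N : ℕ) : IsPreconnected (translateElbow C S T N) := by
  obtain ⟨y, hy, hyT⟩ := hT
  refine IsPreconnected.union (y + N • S) ?_ ?_ (isPreconnected_translateChain hC hS N)
    (isPreconnected_translateChain (hC.image _ (by fun_prop))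
      ⟨y + N • S, mem_image_of_mem (· + N • S) hy, y + T, hyT, add_right_comm _ _ _⟩ N)
  · exact mem_translateChain.2 ⟨y, hy, N, le_rfl, rfl⟩
  · exact mem_translateChain.2
      ⟨_, mem_image_of_mem _ hy, 0, N.zero_le, by rw [zero_nsmul, add_zero]⟩

theorem isBounded_translateElbow {V : Type*} [SeminormedAddCommGroup V] {C : Set V}
    (hC : Bornology.IsBounded C) (S T : V) (N : ℕ) :
    Bornology.IsBounded (translateElbow C S T N) := by
  refine (isBounded_translateChain hC S N).union (isBounded_translateChain ?_ T N)
  rw [← Set.add_singleton]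
  exact hC.add Bornology.isBounded_singleton

theorem one_add_I_mul_sub_mem_slitPlane {z w : ℂ} (h : z.im < w.im ∨ w.re < z.re) :
    (1 + Complex.I) * (z - w) ∈ Complex.slitPlane := by
  rw [Complex.mem_slitPlane_iff]
  by_contra! hnot
  simp only [Complex.mul_re, Complex.mul_im, Complex.add_re, Complex.add_im, Complex.one_re,
    Complex.one_im, Complex.I_re, Complex.I_im, Complex.sub_re, Complex.sub_im] at hnot
  rcases h with h | h <;> linarith

/- The boundary of the grid of translates of `C` splits into its lower right and its upper left
half; the former avoids the diagonal ray leaving `w` to the upper left, the latter the opposite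
ray. -/
theorem encloses_translateGrid {C : Set ℂ} (hC : IsPreconnected C) (h₁ : ∃ y ∈ C, y + 1 ∈ C)
    (hI : ∃ y ∈ C, y + Complex.I ∈ C) {D : ℝ} (hD : ∀ c ∈ C, ‖c‖ ≤ D) {N : ℕ} {w : ℂ}
    (hre : w.re ∈ Ioo D (N - D)) (him : w.im ∈ Ioo D (N - D)) :
    Encloses (translateGrid C 1 Complex.I N) w := by
  have hb : Bornology.IsBounded C := isBounded_iff_forall_norm_le.2 ⟨D, hD⟩
  have hre_C {c : ℂ} (hc : c ∈ C) := abs_le.1 ((Complex.abs_re_le_norm c).trans (hD c hc))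
  have him_C {c : ℂ} (hc : c ∈ C) := abs_le.1 ((Complex.abs_im_le_norm c).trans (hD c hc))
  have grid_re (c : ℂ) (i j : ℕ) : (c + i • 1 + j • Complex.I).re = c.re + i := by simp
  have grid_im (c : ℂ) (i j : ℕ) : (c + i • 1 + j • Complex.I).im = c.im + j := by simp
  have im_diag (z : ℂ) : ((1 + Complex.I) * (z - w)).im = z.re - w.re + (z.im - w.im) := by
    simp [Complex.mul_im, add_comm]
  obtain ⟨x, hx, -⟩ := id h₁
  have hx_re := hre_C hx
  have hx_im := him_C hx
  have hcorner : x + N • 1 + N • Complex.I ∈ translateElbow C Complex.I 1 N := by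
    rw [add_right_comm]
    exact end_mem_translateElbow hx Complex.I 1 N
  refine (encloses_union_of_slitPlane (isPreconnected_translateElbow hC h₁ hI N)
    (isPreconnected_translateElbow hC hI h₁ N) (isBounded_translateElbow hb 1 Complex.I N)
    (isBounded_translateElbow hb Complex.I 1 N)
    ⟨start_mem_translateElbow hx 1 Complex.I N, start_mem_translateElbow hx Complex.I 1 N⟩
    ⟨end_mem_translateElbow hx 1 Complex.I N, hcorner⟩ (c := 1 + Complex.I)
    (fun z hz => ?_) (fun z hz => ?_) ?_ ?_).mono
    (translateElbow_union_subset_translateGrid C 1 Complex.I N)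
  · obtain ⟨c, hc, i, -, j, -, rfl, rfl | rfl⟩ := exists_of_mem_translateElbow hz
    · refine one_add_I_mul_sub_mem_slitPlane (Or.inl ?_)
      simpa using (him_C hc).2.trans_lt him.1
    · refine one_add_I_mul_sub_mem_slitPlane (Or.inr ?_)
      rw [grid_re]
      linarith [(hre_C hc).1, hre.2]
  · obtain ⟨c, hc, i, -, j, -, rfl, rfl | rfl⟩ := exists_of_mem_translateElbow hz
    · refine one_add_I_mul_sub_mem_slitPlane (Or.inr ?_)
      simpa using (hre_C hc).2.trans_lt hre.1
    · refine one_add_I_mul_sub_mem_slitPlane (Or.inl ?_)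
      rw [add_right_comm, grid_im]
      linarith [(him_C hc).1, him.2]
  · rw [im_diag]
    linarith [hre.1, him.1]
  · rw [im_diag, grid_re, grid_im]
    linarith [hre.2, him.2]

end Grid

section RotationAverages

variable {d : ℕ} {F : E d → E d} {W : Set (E d)}

/-- The average displacement `(F^n(z) - z)/n`, whose limits form the rotation sets `rotRel`.
For `n = 0` it is `0`. -/
def rotationAverage (F : E d → E d) (n : ℕ) (z : E d) : E d :=
  (n : ℝ)⁻¹ • (F^[n] z - z)

theorem smul_rotationAverage (F : E d → E d) (n : ℕ) (z : E d) :
    (n : ℝ) • rotationAverage F n z = F^[n] z - z := by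
  rcases eq_or_ne n 0 with rfl | hn
  · simp
  · exact smul_inv_smul₀ (Nat.cast_ne_zero.2 hn) _

theorem continuous_rotationAverage (hF : Continuous F) (n : ℕ) :
    Continuous (rotationAverage F n) := by
  have := hF.iterate n
  unfold rotationAverage
  fun_prop

theorem rotRel_mono {W' : Set (E d)} (h : W ⊆ W') : rotRel F W ⊆ rotRel F W' :=
  fun _ ⟨n, z, hn, hz, hlim⟩ => ⟨n, z, hn, fun i => h (hz i), hlim⟩

theorem rotRel_eq_iInter_closure (F : E d → E d) (W : Set (E d)) :
    rotRel F W = ⋂ N, closure (⋃ n ≥ N, rotationAverage F n '' W) := by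
  ext ρ
  simp only [mem_iInter, Metric.mem_closure_iff, mem_iUnion, mem_image]
  refine ⟨fun ⟨n, z, hn, hz, hlim⟩ N ε hε => ?_, fun h => ?_⟩
  · obtain ⟨i, hiN, hi⟩ := ((hn.eventually_ge_atTop N).and
      (hlim.eventually (ball_mem_nhds ρ hε))).exists
    exact ⟨_, ⟨n i, hiN, z i, hz i, rfl⟩, mem_ball'.1 hi⟩
  · choose y hy hdist using fun i : ℕ => h i (1 / (i + 1)) Nat.one_div_pos_of_nat
    choose n hn z hz hyz using hy
    refine ⟨n, z, tendsto_atTop_mono hn tendsto_id, hz, ?_⟩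
    have hlim : Tendsto y atTop (𝓝 ρ) := tendsto_iff_dist_tendsto_zero.2 <|
      squeeze_zero (fun _ => dist_nonneg) (fun i => (dist_comm ρ (y i) ▸ hdist i).le)
        tendsto_one_div_add_atTop_nhds_zero_nat
    exact hlim.congr fun i => (hyz i).symm

theorem isClosed_rotRel (F : E d → E d) (W : Set (E d)) : IsClosed (rotRel F W) := by
  rw [rotRel_eq_iInter_closure]
  exact isClosed_iInter fun _ => isClosed_closure

theorem rotRel_closure (hF : Continuous F) (W : Set (E d)) :
    rotRel F (closure W) = rotRel F W := by
  refine (rotRel_mono subset_closure).antisymm' ?_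
  rw [rotRel_eq_iInter_closure, rotRel_eq_iInter_closure]
  refine iInter_mono fun N => closure_minimal (iUnion₂_subset fun n hn => ?_) isClosed_closure
  exact (image_closure_subset_closure_image (continuous_rotationAverage hF n)).trans
    (closure_mono (subset_biUnion_of_mem (u := fun n => rotationAverage F n '' W) hn))

theorem norm_iterate_sub_le {M : ℝ} (hM : ∀ z, ‖F z - z‖ ≤ M) (n : ℕ) (z : E d) :
    ‖F^[n] z - z‖ ≤ n * M := by
  induction n with
  | zero => simp
  | succ n ih =>
    rw [Function.iterate_succ_apply', ← sub_add_sub_cancel _ (F^[n] z)]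
    push_cast
    linarith [norm_add_le (F (F^[n] z) - F^[n] z) (F^[n] z - z), hM (F^[n] z)]

theorem norm_rotationAverage_le {M : ℝ} (hM : ∀ z, ‖F z - z‖ ≤ M) (n : ℕ) (z : E d) :
    ‖rotationAverage F n z‖ ≤ M := by
  rcases eq_or_ne n 0 with rfl | hn
  · simpa [rotationAverage] using (norm_nonneg _).trans (hM z)
  · rw [rotationAverage, norm_smul, norm_inv, RCLike.norm_natCast, inv_mul_le_iff₀ (by positivity)]
    exact norm_iterate_sub_le hM n z

theorem isCompact_closure_rotationAverage {M : ℝ} (hM : ∀ z, ‖F z - z‖ ≤ M) (N : ℕ) :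
    IsCompact (closure (⋃ n ≥ N, rotationAverage F n '' W)) := by
  refine (isCompact_closedBall 0 M).of_isClosed_subset isClosed_closure
    (closure_minimal (iUnion₂_subset fun n _ => ?_) isClosed_closedBall)
  rintro _ ⟨z, -, rfl⟩
  exact mem_closedBall_zero_iff.2 (norm_rotationAverage_le hM n z)

theorem antitone_closure_rotationAverage (F : E d → E d) (W : Set (E d)) :
    Antitone fun N => closure (⋃ n ≥ N, rotationAverage F n '' W) := fun _ _ h =>
  closure_mono (biUnion_subset_biUnion_left fun _ => h.trans)

theorem rotRel_nonempty {M : ℝ} (hM : ∀ z, ‖F z - z‖ ≤ M) (hW : W.Nonempty) :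
    (rotRel F W).Nonempty := by
  rw [rotRel_eq_iInter_closure]
  refine IsCompact.nonempty_iInter_of_sequence_nonempty_isCompact_isClosed _
    (fun N => antitone_closure_rotationAverage F W N.le_succ) (fun N => ?_)
    (isCompact_closure_rotationAverage hM 0) fun _ => isClosed_closure
  exact ((hW.image (rotationAverage F N)).mono
    (subset_biUnion_of_mem (u := fun n => rotationAverage F n '' W) le_rfl)).closure

theorem exists_forall_rotationAverage_mem {M : ℝ} (hM : ∀ z, ‖F z - z‖ ≤ M) {O : Set (E d)}
    (hO : IsOpen O) (hsub : rotRel F W ⊆ O) :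
    ∃ N, ∀ n ≥ N, ∀ z ∈ W, rotationAverage F n z ∈ O := by
  rw [rotRel_eq_iInter_closure] at hsub
  obtain ⟨N, hN⟩ := exists_subset_nhds_of_isCompact'
    (antitone_closure_rotationAverage F W).directed_ge
    (isCompact_closure_rotationAverage hM) (fun _ => isClosed_closure)
    fun ρ hρ => hO.mem_nhds (hsub hρ)
  exact ⟨N, fun n hn z hz => hN (subset_closure (mem_iUnion₂.2 ⟨n, hn, z, hz, rfl⟩))⟩

end RotationAverages

section LinearGrowth

variable {d : ℕ} {F : E d → E d} {W : Set (E d)} {f : E d →L[ℝ] ℝ}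

theorem exists_lt_apply_iterate {A : ℝ} (hA : ∀ z ∈ W, A ≤ f z) {ρ : E d} (hρ : ρ ∈ rotRel F W)
    (hfρ : 0 < f ρ) (B : ℝ) : ∃ n, ∃ z ∈ W, B < f (F^[n] z) := by
  obtain ⟨n, z, hn, hz, hlim⟩ := hρ
  have hgrow : Tendsto (fun i => (n i : ℝ) * f (rotationAverage F (n i) (z i))) atTop atTop :=
    (tendsto_natCast_atTop_atTop.comp hn).atTop_mul_pos hfρ ((f.continuous.tendsto ρ).comp hlim)
  obtain ⟨i, hi⟩ := (hgrow.eventually_gt_atTop (B - A)).exists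
  refine ⟨n i, z i, hz i, ?_⟩
  rw [← smul_eq_mul, ← map_smul, smul_rotationAverage, map_sub] at hi
  linarith [hA _ (hz i)]

theorem exists_forall_lt_apply_iterate {M : ℝ} (hM : ∀ z, ‖F z - z‖ ≤ M) {A : ℝ}
    (hA : ∀ z ∈ W, A ≤ f z) {u : ℝ} (hu : 0 < u) (hρ : ∀ ρ ∈ rotRel F W, u < f ρ) (B : ℝ) :
    ∃ N, ∀ n ≥ N, ∀ z ∈ W, B < f (F^[n] z) := by
  obtain ⟨N, hN⟩ := exists_forall_rotationAverage_mem hM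
    (isOpen_lt continuous_const f.continuous) hρ
  obtain ⟨k, hk⟩ := exists_nat_gt ((B - A) / u)
  refine ⟨max N k, fun n hn z hz => ?_⟩
  have havg : u < f (rotationAverage F n z) := hN n (le_of_max_le_left hn) z hz
  have hdisp : n * f (rotationAverage F n z) = f (F^[n] z) - f z := by
    rw [← smul_eq_mul, ← map_smul, smul_rotationAverage, map_sub]
  have hkn : (k : ℝ) ≤ n := Nat.cast_le.2 (le_of_max_le_right hn)
  rw [div_lt_iff₀ hu] at hk
  nlinarith [hA z hz, n.cast_nonneg (α := ℝ)]

/-- The displacements of the orbits starting in `W` grow in the direction `f` at most at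
speed `c`, up to a bounded error that is uniform on `W`. -/
def DriftLE (F : E d → E d) (f : E d →L[ℝ] ℝ) (c : ℝ) (W : Set (E d)) : Prop :=
  ∃ A, ∀ᶠ n in atTop, ∀ z ∈ W, f (F^[n] z - z) ≤ n * c + A

namespace DriftLE

variable {c : ℝ}

theorem of_forall_rotRel_lt {M : ℝ} (hM : ∀ z, ‖F z - z‖ ≤ M) (hc : ∀ ρ ∈ rotRel F W, f ρ < c) :
    DriftLE F f c W := by
  obtain ⟨N, hN⟩ := exists_forall_rotationAverage_mem hM
    (isOpen_lt f.continuous continuous_const) hc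
  refine ⟨0, eventually_atTop.2 ⟨N, fun n hn z hz => ?_⟩⟩
  rw [← smul_rotationAverage, map_smul, smul_eq_mul, add_zero]
  exact mul_le_mul_of_nonneg_left (hN n hn z hz).le n.cast_nonneg

theorem apply_le_of_mem_rotRel (h : DriftLE F f c W) {ρ : E d} (hρ : ρ ∈ rotRel F W) :
    f ρ ≤ c := by
  obtain ⟨A, hA⟩ := h
  obtain ⟨n, z, hn, hz, hlim⟩ := hρ
  have hbound : Tendsto (fun i => c + A * (n i : ℝ)⁻¹) atTop (𝓝 (c + A * 0)) :=
    ((tendsto_inv_atTop_nhds_zero_nat.comp hn).const_mul A).const_add c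
  rw [mul_zero, add_zero] at hbound
  refine le_of_tendsto_of_tendsto ((f.continuous.tendsto ρ).comp hlim) hbound ?_
  filter_upwards [hn.eventually hA, hn.eventually_gt_atTop 0] with i hi hpos
  have hpos' : (0 : ℝ) < n i := Nat.cast_pos.2 hpos
  rw [Function.comp_apply, map_smul, smul_eq_mul, inv_mul_le_iff₀ hpos', mul_add]
  rw [mul_left_comm, mul_inv_cancel₀ hpos'.ne', mul_one]
  exact hi _ (hz i)

theorem of_translates {W' : Set (E d)} (hF : ∀ z, ∀ m ∈ ZLat d, F (z + m) = F z + m)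
    (h : DriftLE F f c W) (hW' : ∀ z ∈ W', ∃ m ∈ ZLat d, z + m ∈ W) : DriftLE F f c W' := by
  obtain ⟨A, hA⟩ := h
  refine ⟨A, hA.mono fun n hn z hz => ?_⟩
  obtain ⟨m, hm, hzm⟩ := hW' z hz
  have hiter : F^[n] (z + m) = F^[n] z + m :=
    (Function.Commute.iterate_left (g := (· + m)) (fun z => hF z m hm) n).eq z
  simpa only [hiter, add_sub_add_right_eq_sub] using hn _ hzm

theorem encloses {H : E d ≃ₜ E d} (h : DriftLE H f c W) (hne : W.Nonempty)
    (hb : Bornology.IsBounded W) : DriftLE H f c {w | Encloses W w} := by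
  obtain ⟨A, hA⟩ := h
  obtain ⟨D, hD⟩ := isBounded_iff_forall_norm_le.1 (hb.image f)
  have hf : ∀ z ∈ W, |f z| ≤ D := fun z hz => hD _ (mem_image_of_mem f hz)
  refine ⟨A + 2 * D, hA.mono fun n hn w hw => ?_⟩
  have hlower : (-f) w ≤ D := hw.le_of_forall_le hne fun z hz => (abs_le'.1 (hf z hz)).2
  have hupper : f (H^[n] w) ≤ D + (n * c + A) := by
    refine (hw.iterate H n).le_of_forall_le (hne.image _) ?_
    rintro _ ⟨z, hz, rfl⟩
    have := hn z hz
    rw [map_sub] at this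
    linarith [le_of_abs_le (hf z hz)]
  rw [neg_apply] at hlower
  rw [map_sub]
  linarith

end DriftLE

end LinearGrowth

section OrbitUnion

variable {X : Type*} {G : X → X} {K : Set X}

/-- The union of the iterates `G^j(K)` for `n ≤ j ≤ m`. -/
def orbitUnion (G : X → X) (K : Set X) (n m : ℕ) : Set X :=
  ⋃ j ∈ Icc n m, G^[j] '' K

theorem mem_orbitUnion {n m : ℕ} {y : X} :
    y ∈ orbitUnion G K n m ↔ ∃ j ∈ Icc n m, ∃ z ∈ K, G^[j] z = y := by
  simp only [orbitUnion, mem_iUnion, mem_image, exists_prop]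

theorem orbitUnion_subset {n m n' m' : ℕ} (hn : n' ≤ n) (hm : m ≤ m') :
    orbitUnion G K n m ⊆ orbitUnion G K n' m' :=
  biUnion_subset_biUnion_left (Icc_subset_Icc hn hm)

theorem isCompact_orbitUnion [TopologicalSpace X] (hG : Continuous G) (hK : IsCompact K)
    (n m : ℕ) : IsCompact (orbitUnion G K n m) :=
  (finite_Icc n m).isCompact_biUnion fun j _ => hK.image (hG.iterate j)

theorem isPreconnected_orbitUnion [TopologicalSpace X] (hG : Continuous G)
    (hK : IsPreconnected K) (hmeet : (G '' K ∩ K).Nonempty) (n m : ℕ) :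
    IsPreconnected (orbitUnion G K n m) := by
  refine IsPreconnected.biUnion_of_chain ordConnected_Icc
    (fun j _ => hK.image _ (hG.iterate j).continuousOn) fun j _ _ => ?_
  obtain ⟨_, ⟨z, hz, rfl⟩, hGz⟩ := hmeet
  exact ⟨G^[j] (G z), mem_image_of_mem _ hGz, z, hz, Function.iterate_succ_apply G j z⟩

theorem DriftLE.orbitUnion {d : ℕ} {G : E d → E d} {f : E d →L[ℝ] ℝ} {c : ℝ} {K : Set (E d)}
    {M : ℝ} (hM : ∀ z, ‖G z - z‖ ≤ M) (h : DriftLE G f c K) (m : ℕ) :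
    DriftLE G f c (orbitUnion G K 0 m) := by
  obtain ⟨A, hA⟩ := h
  have hdisp {j : ℕ} (hj : j ≤ m) (z : E d) : |f (G^[j] z - z)| ≤ ‖f‖ * (m * M) :=
    f.le_opNorm_of_le <| (norm_iterate_sub_le hM j z).trans <| mul_le_mul_of_nonneg_right
      (Nat.cast_le.2 hj) ((norm_nonneg _).trans (hM z))
  refine ⟨A + 2 * (‖f‖ * (m * M)), hA.mono fun n hn y hy => ?_⟩
  obtain ⟨j, ⟨-, hj⟩, z, hz, rfl⟩ := mem_orbitUnion.1 hy
  have hend := (abs_le.1 (hdisp hj (G^[n] z))).2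
  have hstart := (abs_le.1 (hdisp hj z)).1
  have horbit := hn z hz
  rw [← Function.iterate_add_apply, add_comm n j, Function.iterate_add_apply]
  rw [map_sub] at hend hstart horbit ⊢
  linarith

end OrbitUnion

section Chords

theorem exists_record_max_record_min {a b : ℕ → ℝ} (ha : ∀ B, ∃ n, B < a n)
    (hb : ∀ B, ∃ n, b n < B) (N : ℕ) :
    ∃ n₂ ≥ N, ∃ n₃ ≥ n₂, (∀ j ≤ n₃, a j ≤ a n₂) ∧ ∀ j ≤ n₃, b n₃ ≤ b j := by
  obtain ⟨i, -, hi⟩ := (Finset.Iic N).exists_max_image a ⟨N, Finset.mem_Iic.2 le_rfl⟩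
  obtain ⟨n₁, hn₁⟩ := ha (a i)
  obtain ⟨k, -, hk⟩ := (Finset.Iic n₁).exists_min_image b ⟨n₁, Finset.mem_Iic.2 le_rfl⟩
  obtain ⟨n₃, hn₃, hmin⟩ : ∃ n₃, b n₃ < b k ∧ ∀ j < n₃, b k ≤ b j :=
    ⟨Nat.find (hb (b k)), Nat.find_spec (hb (b k)), fun j hj => not_lt.1 (Nat.find_min _ hj)⟩
  have hn₁₃ : n₁ ≤ n₃ := le_of_not_ge fun h => (hk n₃ (Finset.mem_Iic.2 h)).not_gt hn₃
  obtain ⟨n₂, hn₂, hmax⟩ := (Finset.Iic n₃).exists_max_image a ⟨n₃, Finset.mem_Iic.2 le_rfl⟩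
  have hlt : a i < a n₂ := hn₁.trans_le (hmax n₁ (Finset.mem_Iic.2 hn₁₃))
  refine ⟨n₂, le_of_not_ge fun h => (hi n₂ (Finset.mem_Iic.2 h)).not_gt hlt, n₃,
    Finset.mem_Iic.1 hn₂, fun j hj => hmax j (Finset.mem_Iic.2 hj), fun j hj => ?_⟩
  rcases hj.lt_or_eq with hj | rfl
  exacts [hn₃.le.trans (hmin j hj), le_rfl]

variable {X : Type*} [TopologicalSpace X] {G : X → X} {K : Set X}

theorem exists_orbit_extremes {x : X → ℝ} (hG : Continuous G) (hK : IsCompact K)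
    (hKne : K.Nonempty) (hx : Continuous x) (hup : ∀ B, ∃ n, ∃ z ∈ K, B < x (G^[n] z))
    (hdown : ∀ B, ∃ n, ∃ z ∈ K, x (G^[n] z) < B) (N : ℕ) :
    ∃ n₂ ≥ N, ∃ n₃ ≥ n₂, ∃ p₂ ∈ G^[n₂] '' K, ∃ p₃ ∈ G^[n₃] '' K,
      ∀ y ∈ orbitUnion G K 0 n₃, x y ∈ Icc (x p₃) (x p₂) := by
  have hcont (n : ℕ) : ContinuousOn (x ∘ G^[n]) K := (hx.comp (hG.iterate n)).continuousOn
  choose p hp hmax using fun n => hK.exists_isMaxOn hKne (hcont n)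
  choose q hq hmin using fun n => hK.exists_isMinOn hKne (hcont n)
  obtain ⟨n₂, hn₂, n₃, hn₃, ha, hb⟩ := exists_record_max_record_min
    (a := fun n => x (G^[n] (p n))) (b := fun n => x (G^[n] (q n)))
    (fun B => (hup B).imp fun n ⟨z, hz, hB⟩ => hB.trans_le (hmax n hz))
    (fun B => (hdown B).imp fun n ⟨z, hz, hB⟩ => (hmin n hz).trans_lt hB) N
  refine ⟨n₂, hn₂, n₃, hn₃, _, mem_image_of_mem _ (hp n₂), _, mem_image_of_mem _ (hq n₃), ?_⟩
  intro y hy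
  obtain ⟨j, ⟨-, hj⟩, z, hz, rfl⟩ := mem_orbitUnion.1 hy
  exact ⟨(hb j hj).trans (hmin j hz), (hmax j hz).trans (ha j hj)⟩

/- Take an early piece of the orbit of `K`, running up to a record maximum of `x`, and the
following piece, running down to a record minimum. Shifted up by `c`, the former crosses the
latter in the coordinates `(x, h)`. -/
theorem exists_vertical_chord {x h : X → ℝ} (hG : Continuous G) (hK : IsCompact K)
    (hKc : IsPreconnected K) (hmeet : (G '' K ∩ K).Nonempty) (hx : Continuous x)
    (hh : Continuous h) (hup : ∀ B, ∃ n, ∃ z ∈ K, B < x (G^[n] z))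
    (hdown : ∀ B, ∃ n, ∃ z ∈ K, x (G^[n] z) < B)
    (hgrow : ∀ B, ∃ N, ∀ n ≥ N, ∀ z ∈ K, B < h (G^[n] z)) {c : ℝ} (hc : 0 < c) :
    ∃ n, ∃ y ∈ orbitUnion G K 0 n, ∃ y' ∈ orbitUnion G K 0 n, x y' = x y ∧ h y' = h y + c := by
  obtain ⟨z₀, hz₀⟩ : K.Nonempty := hmeet.mono inter_subset_right
  obtain ⟨N, hN⟩ := hgrow (h z₀ + c)
  obtain ⟨n₂, hn₂, n₃, hn₃, p₂, hp₂, p₃, hp₃, hextr⟩ :=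
    exists_orbit_extremes hG hK ⟨z₀, hz₀⟩ hx hup hdown N
  have mem_piece {n j m : ℕ} (hj : j ∈ Icc n m) : G^[j] '' K ⊆ orbitUnion G K n m :=
    subset_biUnion_of_mem (u := fun j => G^[j] '' K) hj
  have early : orbitUnion G K 0 n₂ ⊆ orbitUnion G K 0 n₃ := orbitUnion_subset le_rfl hn₃
  have late : orbitUnion G K n₂ n₃ ⊆ orbitUnion G K 0 n₃ := orbitUnion_subset n₂.zero_le le_rfl
  let φ : X → ℂ := fun z => x z + h z * Complex.I
  let φ' : X → ℂ := fun z => x z + (h z + c : ℝ) * Complex.I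
  have hφ : Continuous φ := by fun_prop
  have hφ' : Continuous φ' := by fun_prop
  obtain ⟨_, ⟨y, hy, rfl⟩, y', hy', heq⟩ := inter_nonempty_of_crossing
    (A := φ' '' orbitUnion G K 0 n₂) (B := φ '' orbitUnion G K n₂ n₃)
    ((isCompact_orbitUnion hG hK _ _).image hφ') ((isCompact_orbitUnion hG hK _ _).image hφ)
    ((isPreconnected_orbitUnion hG hKc hmeet _ _).image _ hφ'.continuousOn)
    ((isPreconnected_orbitUnion hG hKc hmeet _ _).image _ hφ.continuousOn)
    (mem_image_of_mem _ (mem_piece ⟨le_rfl, n₂.zero_le⟩ ⟨z₀, hz₀, rfl⟩))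
    (mem_image_of_mem _ (mem_piece ⟨n₂.zero_le, le_rfl⟩ hp₂))
    (mem_image_of_mem _ (mem_piece ⟨le_rfl, hn₃⟩ hp₂))
    (mem_image_of_mem _ (mem_piece ⟨hn₃, le_rfl⟩ hp₃))
    (by
      rintro _ ⟨y, hy, rfl⟩
      simpa [φ, φ'] using hextr y (early hy))
    (by
      rintro _ ⟨y, hy, rfl⟩
      simpa [φ, φ'] using (hextr y (late hy)).2)
    (by
      rintro _ ⟨y, hy, rfl⟩
      obtain ⟨j, hj, z, hz, rfl⟩ := mem_orbitUnion.1 hy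
      simpa [φ, φ'] using hN j (hn₂.trans hj.1) z hz)
    (by simpa [φ, φ'] using hc)
  refine ⟨n₃, y, early hy, y', late hy', ?_, ?_⟩
  · simpa [φ, φ'] using congrArg Complex.re heq
  · simpa [φ, φ'] using congrArg Complex.im heq

end Chords

section Lattice

variable {d : ℕ}

theorem exists_mem_ZLat_norm_add_le (z : E d) : ∃ m ∈ ZLat d, ‖z + m‖ ≤ √d := by
  refine ⟨-WithLp.toLp 2 fun i => (⌊z i⌋ : ℝ), neg_mem fun i => ⟨_, rfl⟩, ?_⟩
  rw [← sub_eq_add_neg, EuclideanSpace.norm_eq]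
  refine Real.sqrt_le_sqrt ?_
  calc ∑ i, ‖(z - WithLp.toLp 2 fun i => (⌊z i⌋ : ℝ)) i‖ ^ 2
      ≤ ∑ _ : Fin d, (1 : ℝ) := Finset.sum_le_sum fun i _ => by
        rw [PiLp.sub_apply, Int.self_sub_floor, Real.norm_of_nonneg (Int.fract_nonneg _)]
        exact pow_le_one₀ (Int.fract_nonneg _) (Int.fract_lt_one _).le
    _ = d := by simp

theorem exists_forall_norm_apply_sub_self_le {G : E d → E d} (hG : Continuous G)
    (hper : ∀ z, ∀ m ∈ ZLat d, G (z + m) = G z + m) : ∃ M, ∀ z, ‖G z - z‖ ≤ M := by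
  obtain ⟨M, hM⟩ := (isCompact_closedBall (0 : E d) √d).exists_bound_of_continuousOn
    (f := fun z => G z - z) (by fun_prop)
  refine ⟨M, fun z => ?_⟩
  obtain ⟨m, hm, hzm⟩ := exists_mem_ZLat_norm_add_le z
  simpa only [hper z m hm, add_sub_add_right_eq_sub] using hM (z + m) (by simpa using hzm)

theorem exists_mem_ZLat_notMem_submodule {O : Set (E d)} (hO : IsOpen O) (hne : O.Nonempty)
    (hcone : ∀ z ∈ O, ∀ r : ℝ, 0 < r → r • z ∈ O) {V : Submodule ℝ (E d)} (hV : V ≠ ⊤) :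
    ∃ m ∈ ZLat d, m ∈ O ∧ m ∉ V := by
  obtain ⟨z, hzO, hzV⟩ : ∃ z ∈ O, z ∉ V := by
    by_contra! hsub
    exact hV (V.eq_top_of_nonempty_interior' (hne.mono (interior_maximal hsub hO)))
  obtain ⟨ε, hε, hball⟩ := Metric.isOpen_iff.1
    (hO.inter V.closed_of_finiteDimensional.isOpen_compl) z ⟨hzO, hzV⟩
  obtain ⟨n, hn⟩ := exists_nat_gt (√d / ε)
  have hpos : (0 : ℝ) < n := (by positivity : 0 ≤ √d / ε).trans_lt hn
  obtain ⟨m, hm, hnm⟩ := exists_mem_ZLat_norm_add_le ((n : ℝ) • z)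
  have hmem : (n : ℝ)⁻¹ • -m ∈ ball z ε := by
    have hdiff : z - (n : ℝ)⁻¹ • -m = (n : ℝ)⁻¹ • ((n : ℝ) • z + m) := by
      rw [smul_add, inv_smul_smul₀ hpos.ne', smul_neg, sub_neg_eq_add]
    rw [mem_ball_iff_norm', hdiff, norm_smul, norm_inv, RCLike.norm_natCast, inv_mul_lt_iff₀ hpos]
    exact hnm.trans_lt ((div_lt_iff₀ hε).1 hn)
  refine ⟨-m, neg_mem hm, ?_, fun hmV => (hball hmem).2 (V.smul_mem _ hmV)⟩
  simpa only [smul_inv_smul₀ hpos.ne'] using hcone _ (hball hmem).1 n hpos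

theorem exists_linearIndependent_mem_ZLat {O : Set (E 2)} (hO : IsOpen O) (hne : O.Nonempty)
    (hcone : ∀ z ∈ O, ∀ r : ℝ, 0 < r → r • z ∈ O) :
    ∃ S ∈ ZLat 2, ∃ T ∈ ZLat 2, S ∈ O ∧ T ∈ O ∧ LinearIndependent ℝ ![S, T] := by
  have hdim : Module.finrank ℝ (E 2) = 2 := finrank_euclideanSpace_fin
  have ne_top {x : E 2} : ℝ ∙ x ≠ ⊤ := fun h => by
    have := finrank_span_le_card (R := ℝ) ({x} : Set (E 2))
    rw [h, finrank_top, hdim] at this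
    simp at this
  obtain ⟨S, hS, hSO, hS₀⟩ := exists_mem_ZLat_notMem_submodule hO hne hcone (ne_top (x := 0))
  obtain ⟨T, hT, hTO, hTS⟩ := exists_mem_ZLat_notMem_submodule hO hne hcone (ne_top (x := S))
  refine ⟨S, hS, T, hT, hSO, hTO, (LinearIndependent.pair_iff' ?_).2 fun r hr => ?_⟩
  · rintro rfl
    exact hS₀ (zero_mem _)
  · exact hTS (Submodule.mem_span_singleton.2 ⟨r, hr⟩)

theorem exists_continuousLinearEquiv_complex {S T : E 2} (h : LinearIndependent ℝ ![S, T]) :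
    ∃ Φ : E 2 ≃L[ℝ] ℂ, Φ S = 1 ∧ Φ T = Complex.I := by
  let b := basisOfLinearIndependentOfCardEqFinrank h (by simp)
  let Φ := b.equiv Complex.basisOneI (Equiv.refl _)
  have hΦ (i : Fin 2) : Φ (![S, T] i) = ![1, Complex.I] i := by
    rw [← coe_basisOfLinearIndependentOfCardEqFinrank h (by simp), ← Complex.coe_basisOneI]
    exact b.equiv_apply i _ _
  exact ⟨Φ.toContinuousLinearEquiv, hΦ 0, hΦ 1⟩

end Lattice

section TranslationChords

theorem exists_forall_le_apply_of_isCompact {V : Type*} [TopologicalSpace V] [AddCommMonoid V]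
    [Module ℝ V] {K : Set V} (hK : IsCompact K) (f : V →L[ℝ] ℝ) : ∃ A, ∀ z ∈ K, A ≤ f z :=
  let ⟨A, hA⟩ := hK.bddBelow_image f.continuous.continuousOn
  ⟨A, fun _ hz => hA (mem_image_of_mem f hz)⟩

theorem eq_div_re_smul_of_im_mul_re_eq {z w : ℂ} (hw : w.re ≠ 0)
    (h : w.im * z.re = w.re * z.im) : z = (z.re / w.re) • w := by
  apply Complex.ext
  · simp [div_mul_cancel₀ _ hw]
  · rw [Complex.smul_im, smul_eq_mul, div_mul_eq_mul_div, eq_div_iff hw]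
    linear_combination -h

/- In the coordinates `(x, f)`, where `x` vanishes at `S`, a translation by `S` is vertical. -/
theorem exists_translation_chord {G : E 2 → E 2} (hG : Continuous G) {M : ℝ}
    (hM : ∀ z, ‖G z - z‖ ≤ M) {K : Set (E 2)} (hK : IsCompact K) (hKc : IsPreconnected K)
    (hmeet : (G '' K ∩ K).Nonempty) {f : E 2 →L[ℝ] ℝ} {u : ℝ} (hu : 0 < u)
    (hf : ∀ ρ ∈ rotRel G K, u < f ρ) {ρ₁ ρ₂ : E 2} (hρ₁ : ρ₁ ∈ rotRel G K)
    (hρ₂ : ρ₂ ∈ rotRel G K) {Φ : E 2 ≃L[ℝ] ℂ} (h₁ : Φ ρ₁ = 1) (h₂ : Φ ρ₂ = Complex.I) {S : E 2}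
    (hre : 0 < (Φ S).re) (him : 0 < (Φ S).im) :
    ∃ n, ∃ y ∈ orbitUnion G K 0 n, y + S ∈ orbitUnion G K 0 n := by
  let x : E 2 →L[ℝ] ℝ := (Φ S).im • Complex.reCLM ∘L Φ - (Φ S).re • Complex.imCLM ∘L Φ
  have hx (z : E 2) : x z = (Φ S).im * (Φ z).re - (Φ S).re * (Φ z).im := rfl
  have hS : S = (Φ S).re • ρ₁ + (Φ S).im • ρ₂ := Φ.injective <| by
    rw [map_add, map_smul, map_smul, h₁, h₂]
    simp
  have hfS : 0 < f S := by
    rw [hS, map_add, map_smul, map_smul]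
    exact add_pos (mul_pos hre (hu.trans (hf ρ₁ hρ₁))) (mul_pos him (hu.trans (hf ρ₂ hρ₂)))
  obtain ⟨A, hA⟩ := exists_forall_le_apply_of_isCompact hK x
  obtain ⟨A', hA'⟩ := exists_forall_le_apply_of_isCompact hK (-x)
  obtain ⟨A'', hA''⟩ := exists_forall_le_apply_of_isCompact hK f
  have hup := exists_lt_apply_iterate hA hρ₁ (by simpa [hx, h₁] using him)
  have hdown (B : ℝ) : ∃ n, ∃ z ∈ K, x (G^[n] z) < B := by
    obtain ⟨n, z, hz, hlt⟩ := exists_lt_apply_iterate hA' hρ₂ (by simpa [hx, h₂] using hre) (-B)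
    exact ⟨n, z, hz, neg_lt_neg_iff.1 hlt⟩
  obtain ⟨n, y, hy, y', hy', hxy, hfy⟩ := exists_vertical_chord hG hK hKc hmeet x.continuous
    f.continuous hup hdown (exists_forall_lt_apply_iterate hM hA'' hu hf) hfS
  have hxw : x (y' - y) = 0 := by rw [map_sub, hxy, sub_self]
  obtain ⟨r, hr⟩ : ∃ r : ℝ, y' - y = r • S := ⟨_, Φ.injective <| by
    rw [map_smul]
    exact eq_div_re_smul_of_im_mul_re_eq hre.ne' (sub_eq_zero.1 (hx _ ▸ hxw))⟩
  have hr₁ : r = 1 := by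
    have hfw : f (y' - y) = r * f S := by rw [hr, map_smul, smul_eq_mul]
    rw [map_sub, hfy, add_sub_cancel_left] at hfw
    exact (mul_eq_right₀ hfS.ne').1 hfw.symm
  refine ⟨n, y, hy, ?_⟩
  rwa [← one_smul ℝ S, ← hr₁, ← hr, add_sub_cancel]

end TranslationChords

section LatticeTranslates

theorem exists_lattice_chords {G : E 2 → E 2} (hG : Continuous G) {M : ℝ}
    (hM : ∀ z, ‖G z - z‖ ≤ M) {K : Set (E 2)} (hK : IsCompact K) (hKc : IsPreconnected K)
    (hmeet : (G '' K ∩ K).Nonempty) {f : E 2 →L[ℝ] ℝ} {u : ℝ} (hu : 0 < u)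
    (hf : ∀ ρ ∈ rotRel G K, u < f ρ) {ρ₁ ρ₂ : E 2} (hρ₁ : ρ₁ ∈ rotRel G K)
    (hρ₂ : ρ₂ ∈ rotRel G K) (hli : LinearIndependent ℝ ![ρ₁, ρ₂]) :
    ∃ n, ∃ S ∈ ZLat 2, ∃ T ∈ ZLat 2, LinearIndependent ℝ ![S, T] ∧
      (∃ y ∈ orbitUnion G K 0 n, y + S ∈ orbitUnion G K 0 n) ∧
      ∃ y ∈ orbitUnion G K 0 n, y + T ∈ orbitUnion G K 0 n := by
  obtain ⟨Φ, h₁, h₂⟩ := exists_continuousLinearEquiv_complex hli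
  have hO : IsOpen {z | 0 < (Φ z).re ∧ 0 < (Φ z).im} :=
    (isOpen_lt continuous_const (Complex.continuous_re.comp Φ.continuous)).inter
      (isOpen_lt continuous_const (Complex.continuous_im.comp Φ.continuous))
  obtain ⟨S, hS, T, hT, hSO, hTO, hST⟩ := exists_linearIndependent_mem_ZLat hO
    ⟨ρ₁ + ρ₂, by simp [h₁, h₂]⟩ fun z hz r hr => by
      simpa only [mem_ofPred_eq, map_smul, Complex.smul_re, Complex.smul_im, smul_eq_mul,
        mul_pos_iff_of_pos_left hr] using hz
  obtain ⟨n, y, hy, hyS⟩ :=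
    exists_translation_chord hG hM hK hKc hmeet hu hf hρ₁ hρ₂ h₁ h₂ hSO.1 hSO.2
  obtain ⟨n', y', hy', hyT⟩ :=
    exists_translation_chord hG hM hK hKc hmeet hu hf hρ₁ hρ₂ h₁ h₂ hTO.1 hTO.2
  have le_left : orbitUnion G K 0 n ⊆ orbitUnion G K 0 (max n n') :=
    orbitUnion_subset le_rfl (le_max_left n n')
  have le_right : orbitUnion G K 0 n' ⊆ orbitUnion G K 0 (max n n') :=
    orbitUnion_subset le_rfl (le_max_right n n')
  exact ⟨max n n', S, hS, T, hT, hST, ⟨y, le_left hy, le_left hyS⟩,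
    y', le_right hy', le_right hyT⟩

theorem exists_int_add_mem_Ioo (t : ℝ) {a b : ℝ} (hab : a + 1 < b) :
    ∃ i : ℤ, t + i ∈ Ioo a b := by
  refine ⟨⌊a - t⌋ + 1, ?_, ?_⟩ <;> push_cast
  · linarith [Int.lt_floor_add_one (a - t)]
  · linarith [Int.floor_le (a - t)]

theorem exists_isBounded_translates_encloses {C : Set (E 2)} (hC : IsPreconnected C)
    (hb : Bornology.IsBounded C) {S T : E 2} (hS : S ∈ ZLat 2) (hT : T ∈ ZLat 2)
    (hli : LinearIndependent ℝ ![S, T]) (hCS : ∃ y ∈ C, y + S ∈ C) (hCT : ∃ y ∈ C, y + T ∈ C) :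
    ∃ Q, Q.Nonempty ∧ Bornology.IsBounded Q ∧ (∀ z ∈ Q, ∃ m ∈ ZLat 2, z + m ∈ C) ∧
      ∀ z, ∃ m ∈ ZLat 2, Encloses Q (z + m) := by
  obtain ⟨Φ, hΦS, hΦT⟩ := exists_continuousLinearEquiv_complex hli
  obtain ⟨D, hD⟩ := isBounded_iff_forall_norm_le.1 (hb.image (Φ : E 2 →L[ℝ] ℂ))
  obtain ⟨N, hN⟩ := exists_nat_gt (D + 1 + D)
  have hN' : D + 1 < N - D := lt_sub_iff_add_lt.2 hN
  refine ⟨translateGrid C S T N, ?_, isBounded_translateGrid hb S T N, fun z hz => ?_,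
    fun z => ?_⟩
  · obtain ⟨y, hy, -⟩ := hCS
    exact ⟨_, mem_translateGrid.2 ⟨y, hy, 0, N.zero_le, 0, N.zero_le, rfl⟩⟩
  · obtain ⟨c, hc, i, -, j, -, rfl⟩ := mem_translateGrid.1 hz
    refine ⟨-(i • S + j • T), neg_mem (add_mem (nsmul_mem hS i) (nsmul_mem hT j)), ?_⟩
    rwa [add_assoc c, add_neg_cancel_right]
  · obtain ⟨i, hi⟩ := exists_int_add_mem_Ioo (Φ z).re hN'
    obtain ⟨j, hj⟩ := exists_int_add_mem_Ioo (Φ z).im hN'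
    refine ⟨i • S + j • T, add_mem (zsmul_mem hS i) (zsmul_mem hT j), ?_⟩
    have hchord {R : E 2} (h : ∃ y ∈ C, y + R ∈ C) : ∃ y ∈ Φ '' C, y + Φ R ∈ Φ '' C := by
      obtain ⟨y, hy, hyR⟩ := h
      exact ⟨Φ y, mem_image_of_mem Φ hy, y + R, hyR, map_add Φ y R⟩
    have himage : Encloses (Φ '' translateGrid C S T N) (Φ (z + (i • S + j • T))) := by
      rw [image_translateGrid, hΦS, hΦT]
      exact encloses_translateGrid (hC.image Φ Φ.continuous.continuousOn) (hΦS ▸ hchord hCS)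
        (hΦT ▸ hchord hCT) hD (by simpa [hΦS, hΦT] using hi) (by simpa [hΦS, hΦT] using hj)
    simpa only [ContinuousLinearEquiv.coe_toHomeomorph, Φ.symm_image_image,
      Φ.symm_apply_apply] using himage.image Φ.symm.toHomeomorph

end LatticeTranslates

section Drift

/- A bound on the drift of `Û` passes to the orbit of `Û`, to its lattice translates, to the
points enclosed by finitely many of these, and hence, modulo the lattice, to the whole plane. -/
theorem DriftLE.univ {G : E 2 ≃ₜ E 2}
    (hG : ∀ z, ∀ m ∈ ZLat 2, G (z + m) = G z + m) {M : ℝ} (hM : ∀ z, ‖G z - z‖ ≤ M)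
    {K : Set (E 2)} (hK : IsCompact K) (hKc : IsPreconnected K) (hmeet : (G '' K ∩ K).Nonempty)
    {h : E 2 →L[ℝ] ℝ} {u : ℝ} (hu : 0 < u) (hh : ∀ ρ ∈ rotRel G K, u < h ρ) {ρ₁ ρ₂ : E 2}
    (hρ₁ : ρ₁ ∈ rotRel G K) (hρ₂ : ρ₂ ∈ rotRel G K) (hli : LinearIndependent ℝ ![ρ₁, ρ₂])
    {f : E 2 →L[ℝ] ℝ} {c : ℝ} (hf : DriftLE G f c K) : DriftLE G f c univ := by
  obtain ⟨n, S, hS, T, hT, hST, hCS, hCT⟩ :=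
    exists_lattice_chords G.continuous hM hK hKc hmeet hu hh hρ₁ hρ₂ hli
  obtain ⟨Q, hQne, hQb, hQC, hQ⟩ := exists_isBounded_translates_encloses
    (isPreconnected_orbitUnion G.continuous hKc hmeet 0 n)
    (isCompact_orbitUnion G.continuous hK 0 n).isBounded hS hT hST hCS hCT
  exact (((hf.orbitUnion hM n).of_translates hG hQC).encloses hQne hQb).of_translates hG
    fun z _ => hQ z

theorem rotSet_subset_closure_convexHull {G : E 2 ≃ₜ E 2}
    (hG : ∀ z, ∀ m ∈ ZLat 2, G (z + m) = G z + m) {U : Set (E 2)} (hUb : Bornology.IsBounded U)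
    (hUc : IsPreconnected U) (hmeet : (G '' U ∩ U).Nonempty) {ρ₁ ρ₂ : E 2}
    (hρ₁ : ρ₁ ∈ rotRel G U) (hρ₂ : ρ₂ ∈ rotRel G U) (hli : LinearIndependent ℝ ![ρ₁, ρ₂])
    (h₀ : 0 ∉ closure (convexHull ℝ (rotRel G U))) :
    rotSet G ⊆ closure (convexHull ℝ (rotRel G U)) := by
  obtain ⟨M, hM⟩ := exists_forall_norm_apply_sub_self_le G.continuous hG
  have hcl := rotRel_closure G.continuous U
  have hsub : rotRel G (closure U) ⊆ closure (convexHull ℝ (rotRel G U)) :=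
    hcl.subset.trans ((subset_convexHull ℝ _).trans subset_closure)
  have hconv := (convex_convexHull ℝ (rotRel G U)).closure
  have hmeet' : (G '' closure U ∩ closure U).Nonempty :=
    hmeet.mono (inter_subset_inter (image_mono subset_closure) subset_closure)
  obtain ⟨h, u, hu, hh⟩ := geometric_hahn_banach_point_closed hconv isClosed_closure h₀
  rw [map_zero] at hu
  intro ρ hρ
  by_contra hnot
  obtain ⟨f, c, hf, hc⟩ := geometric_hahn_banach_closed_point hconv isClosed_closure hnot
  have hdrift := DriftLE.of_forall_rotRel_lt (f := f) hM fun σ hσ => hf σ (hsub hσ)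
  exact hc.not_ge <| (hdrift.univ hG hM hUb.isCompact_closure hUc.closure hmeet' hu
    (fun σ hσ => hh σ (hsub hσ)) (hcl.symm ▸ hρ₁) (hcl.symm ▸ hρ₂) hli).apply_le_of_mem_rotRel hρ

theorem rotation_set_equals_segment_general (G : E 2 ≃ₜ E 2)
    (hG : ∀ z, ∀ m ∈ ZLat 2, G (z + m) = G z + m) {U : Set (E 2)} (hUb : Bornology.IsBounded U)
    (hUc : IsPreconnected U) (hmeet : (G '' U ∩ U).Nonempty) (hconv : Convex ℝ (rotRel G U))
    (h₀ : 0 ∉ rotRel G U) {ρ₁ ρ₂ : E 2} (hρ₁ : ρ₁ ∈ rotRel G U) (hρ₂ : ρ₂ ∈ rotRel G U)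
    (hli : LinearIndependent ℝ ![ρ₁, ρ₂]) : rotSet G = rotRel G U := by
  have hhull : closure (convexHull ℝ (rotRel G U)) = rotRel G U := by
    rw [hconv.convexHull_eq, (isClosed_rotRel G U).closure_eq]
  have hsub := rotSet_subset_closure_convexHull hG hUb hUc hmeet hρ₁ hρ₂ hli
  rw [hhull] at hsub
  exact (hsub h₀).antisymm (rotRel_mono (subset_univ U))

end Drift

section Segments

variable {lam a b : ℝ} {v : E 2}

theorem sdot_self_pos (hv : v ≠ 0) : 0 < sdot v v := by
  have h := real_inner_self_pos.2 hv
  simpa only [PiLp.inner_apply, Fin.sum_univ_two, RCLike.inner_apply, conj_trivial, sdot] using h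

theorem sdot_zero (v : E 2) : sdot v 0 = 0 := by simp [sdot]

theorem pdot_zero (v : E 2) : pdot v 0 = 0 := by simp [pdot]

theorem sdot_add_smul (v z w : E 2) (s t : ℝ) :
    sdot v (s • z + t • w) = s * sdot v z + t * sdot v w := by
  simp only [sdot, PiLp.add_apply, PiLp.smul_apply, smul_eq_mul]
  ring

theorem pdot_add_smul (v z w : E 2) (s t : ℝ) :
    pdot v (s • z + t • w) = s * pdot v z + t * pdot v w := by
  simp only [pdot, PiLp.add_apply, PiLp.smul_apply, smul_eq_mul]
  ring

theorem convex_lineSeg (lam : ℝ) (v : E 2) (a b : ℝ) : Convex ℝ (lineSeg lam v a b) := by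
  rintro z ⟨hz, haz, hbz⟩ w ⟨hw, haw, hbw⟩ s t hs ht hst
  refine ⟨?_, ?_, ?_⟩
  · rw [lineL, mem_ofPred_eq] at hz hw ⊢
    rw [sdot_add_smul, hz, hw, ← add_mul, hst, one_mul]
  · rw [sdot_add_smul, pdot_add_smul]
    nlinarith
  · rw [sdot_add_smul, pdot_add_smul]
    nlinarith

theorem zero_notMem_lineSeg (hlam : lam ≠ 0) (hv : v ≠ 0) : 0 ∉ lineSeg lam v a b := fun h => by
  have h₀ : sdot v 0 = lam * sdot v v := h.1
  refine mul_ne_zero hlam (sdot_self_pos hv).ne' ?_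
  rw [← h₀, sdot_zero]

theorem pos_of_nonempty_lineSeg (hlam : lam ≠ 0) (hv : v ≠ 0) (hab : a < b)
    (h : (lineSeg lam v a b).Nonempty) : 0 < lam := by
  obtain ⟨z, hz, ha, hb⟩ := h
  rw [lineL, mem_ofPred_eq] at hz
  have hnonneg : 0 ≤ lam * sdot v v := by
    rw [hz] at ha hb
    nlinarith
  exact (nonneg_of_mul_nonneg_left hnonneg (sdot_self_pos hv)).lt_of_ne' hlam

/- The endpoints of the segment lie on the two lines `⟨z,v^⊥⟩ = κ⟨z,v⟩`, `κ = a, b`, through `0`. -/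
theorem exists_linearIndependent_mem_lineSeg (hlam : 0 < lam) (hv : v ≠ 0) (hab : a < b) :
    ∃ ρ₁ ∈ lineSeg lam v a b, ∃ ρ₂ ∈ lineSeg lam v a b, LinearIndependent ℝ ![ρ₁, ρ₂] := by
  let p (κ : ℝ) : E 2 := !₂[lam * (v 0 - κ * v 1), lam * (v 1 + κ * v 0)]
  have hs (κ : ℝ) : sdot v (p κ) = lam * sdot v v := by
    simp only [sdot, p, Matrix.cons_val_zero, Matrix.cons_val_one]
    ring
  have hp (κ : ℝ) : pdot v (p κ) = κ * sdot v (p κ) := by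
    rw [hs]
    simp only [sdot, pdot, p, Matrix.cons_val_zero, Matrix.cons_val_one]
    ring
  have hpos : 0 < lam * sdot v v := mul_pos hlam (sdot_self_pos hv)
  refine ⟨p a, ⟨hs a, (hp a).ge, ?_⟩, p b, ⟨hs b, ?_, (hp b).le⟩, ?_⟩
  · rw [hp, hs]
    exact mul_le_mul_of_nonneg_right hab.le hpos.le
  · rw [hp, hs]
    exact mul_le_mul_of_nonneg_right hab.le hpos.le
  · refine LinearIndependent.pair_iff.2 fun s t hst => ?_
    have hsdot : s * (lam * sdot v v) + t * (lam * sdot v v) = 0 := by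
      have h := congrArg (sdot v) hst
      rwa [sdot_add_smul, hs, hs, sdot_zero] at h
    have hpdot : s * (a * (lam * sdot v v)) + t * (b * (lam * sdot v v)) = 0 := by
      have h := congrArg (pdot v) hst
      rwa [pdot_add_smul, hp, hp, hs, hs, pdot_zero] at h
    have hst₀ : s + t = 0 := by
      rw [← add_mul] at hsdot
      exact (mul_eq_zero_iff_right hpos.ne').1 hsdot
    have ht : t * (b - a) = 0 := by
      refine (mul_eq_zero_iff_right hpos.ne').1 ?_
      linear_combination hpdot - a * hsdot
    have ht₀ : t = 0 := (mul_eq_zero_iff_right (sub_pos.2 hab).ne').1 ht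
    exact ⟨by rwa [ht₀, add_zero] at hst₀, ht₀⟩

end Segments

/-- **Lemma (the rotation subset determines the rotation set).**
If `Û ⊆ ℝ²` is bounded and connected with `G(Û) ∩ Û ≠ ∅` and
`ρ_Û(G) = L_{λ,v}[a,b]` with `λ ≠ 0` and `a < b`, then `ρ(G) = L_{λ,v}[a,b]`. -/
theorem rotation_set_equals_segment
    (G : E 2 ≃ₜ E 2) (g : T 2 ≃ₜ T 2) (hlift : IsLift G g)
    (Uh : Set (E 2)) (hUb : Bornology.IsBounded Uh) (hUc : IsConnected Uh)
    (hmeet : ((⇑G) '' Uh ∩ Uh).Nonempty)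
    (lam : ℝ) (hlam : lam ≠ 0) (v : E 2) (hv : v ≠ 0) (a b : ℝ) (hab : a < b)
    (hrot : rotRel (⇑G) Uh = lineSeg lam v a b) :
    rotSet (⇑G) = lineSeg lam v a b := by
  obtain ⟨M, hM⟩ := exists_forall_norm_apply_sub_self_le G.continuous hlift.2
  have hpos : 0 < lam := pos_of_nonempty_lineSeg hlam hv hab
    (hrot ▸ rotRel_nonempty hM hUc.nonempty)
  obtain ⟨ρ₁, hρ₁, ρ₂, hρ₂, hli⟩ := exists_linearIndependent_mem_lineSeg hpos hv hab
  rw [← hrot] at hρ₁ hρ₂ ⊢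
  exact rotation_set_equals_segment_general G hlift.2 hUb hUc.isPreconnected hmeet
    (hrot ▸ convex_lineSeg lam v a b) (hrot ▸ zero_notMem_lineSeg hlam hv) hρ₁ hρ₂ hli
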